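/- Type-and-effect preservation of the CBV translation: if Γ ⊢ e :^φ τ in the CBV λ-calculus with effects, then ⟦Γ⟧v ⊢ ⟦e⟧v :^φ F ⟦τ⟧v in CBPV with effects. -/

import Mathlib

set_option autoImplicit false

/-- A preordered monoid of effects `(E, ·, ⊥, ≤eff)`, with a distinguished `tock` effect. -/
structure EffSig (E : Type) where
  op : E → E → E
  bot : E
  tock : E
  le : E → E → Prop
  op_assoc : ∀ a b c, op (op a b) c = op a (op b c)
  bot_op : ∀ a, op bot a = a
  op_bot : ∀ a, op a bot = a
  le_refl : ∀ a, le a a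
  le_trans : ∀ a b c, le a b → le b c → le a c
  le_op : ∀ a b c d, le a b → le c d → le (op a c) (op b d)

namespace CBPVEff

mutual
/-- CBPV value types: `unit`, graded thunks `U_φ B`, positive products, sums. -/
inductive VTy (E : Type) : Type where
  | unit : VTy E
  | thunk : E → CTy E → VTy E
  | prod : VTy E → VTy E → VTy E
  | sum : VTy E → VTy E → VTy E
/-- CBPV computation types: functions, returners `F A`, negative products. -/
inductive CTy (E : Type) : Type where
  | arr : VTy E → CTy E → CTy E
  | F : VTy E → CTy E
  | wth : CTy E → CTy E → CTy E
end

mutual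
/-- CBPV values (de Bruijn indices for variables). -/
inductive Val : Type where
  | var : Nat → Val
  | unit : Val
  | thunk : Comp → Val
  | pair : Val → Val → Val
  | inl : Val → Val
  | inr : Val → Val
/-- CBPV computations. -/
inductive Comp : Type where
  | lam : Comp → Comp
  | app : Comp → Val → Comp
  | force : Val → Comp
  | split : Val → Comp → Comp
  | cpair : Comp → Comp → Comp
  | fst : Comp → Comp
  | snd : Comp → Comp
  | ret : Val → Comp
  | letin : Comp → Comp → Comp
  | seq : Val → Comp → Comp
  | case : Val → Comp → Comp → Comp
  | tick : Comp
end

mutual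
/-- The value typing judgment `Γ ⊢ V : A` of the CBPV type-and-effect system. -/
inductive VHasTy {E : Type} (S : EffSig E) : List (VTy E) → Val → VTy E → Prop where
  | var : ∀ {Γ : List (VTy E)} {x : Nat} {A : VTy E},
      Γ[x]? = some A → VHasTy S Γ (.var x) A
  | unit : ∀ {Γ : List (VTy E)}, VHasTy S Γ .unit .unit
  | thunk : ∀ {Γ : List (VTy E)} {M : Comp} {φ : E} {B : CTy E},
      CHasTy S Γ M φ B → VHasTy S Γ (.thunk M) (.thunk φ B)
  | pair : ∀ {Γ : List (VTy E)} {V₁ V₂ : Val} {A₁ A₂ : VTy E},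
      VHasTy S Γ V₁ A₁ → VHasTy S Γ V₂ A₂ → VHasTy S Γ (.pair V₁ V₂) (.prod A₁ A₂)
  | inl : ∀ {Γ : List (VTy E)} {V : Val} {A₁ A₂ : VTy E},
      VHasTy S Γ V A₁ → VHasTy S Γ (.inl V) (.sum A₁ A₂)
  | inr : ∀ {Γ : List (VTy E)} {V : Val} {A₁ A₂ : VTy E},
      VHasTy S Γ V A₂ → VHasTy S Γ (.inr V) (.sum A₁ A₂)

/-- The computation typing judgment `Γ ⊢ M :^φ B` of the CBPV type-and-effect system. -/
inductive CHasTy {E : Type} (S : EffSig E) : List (VTy E) → Comp → E → CTy E → Prop where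
  | tick : ∀ {Γ : List (VTy E)} {φ : E}, S.le S.tock φ → CHasTy S Γ .tick φ (.F .unit)
  | lam : ∀ {Γ : List (VTy E)} {A : VTy E} {M : Comp} {φ : E} {B : CTy E},
      CHasTy S (A :: Γ) M φ B → CHasTy S Γ (.lam M) φ (.arr A B)
  | app : ∀ {Γ : List (VTy E)} {M : Comp} {V : Val} {A : VTy E} {φ : E} {B : CTy E},
      CHasTy S Γ M φ (.arr A B) → VHasTy S Γ V A → CHasTy S Γ (.app M V) φ B
  | force : ∀ {Γ : List (VTy E)} {V : Val} {φ' φ : E} {B : CTy E},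
      VHasTy S Γ V (.thunk φ' B) → S.le φ' φ → CHasTy S Γ (.force V) φ B
  | ret : ∀ {Γ : List (VTy E)} {V : Val} {A : VTy E} {φ : E},
      VHasTy S Γ V A → S.le S.bot φ → CHasTy S Γ (.ret V) φ (.F A)
  | letin : ∀ {Γ : List (VTy E)} {M N : Comp} {A : VTy E} {φ₁ φ₂ φ : E} {B : CTy E},
      CHasTy S Γ M φ₁ (.F A) → CHasTy S (A :: Γ) N φ₂ B →
      S.le (S.op φ₁ φ₂) φ → CHasTy S Γ (.letin M N) φ B
  | split : ∀ {Γ : List (VTy E)} {V : Val} {A₁ A₂ : VTy E} {N : Comp} {φ : E} {B : CTy E},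
      VHasTy S Γ V (.prod A₁ A₂) → CHasTy S (A₂ :: A₁ :: Γ) N φ B →
      CHasTy S Γ (.split V N) φ B
  | cpair : ∀ {Γ : List (VTy E)} {M₁ M₂ : Comp} {φ : E} {B₁ B₂ : CTy E},
      CHasTy S Γ M₁ φ B₁ → CHasTy S Γ M₂ φ B₂ → CHasTy S Γ (.cpair M₁ M₂) φ (.wth B₁ B₂)
  | fst : ∀ {Γ : List (VTy E)} {M : Comp} {φ : E} {B₁ B₂ : CTy E},
      CHasTy S Γ M φ (.wth B₁ B₂) → CHasTy S Γ (.fst M) φ B₁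
  | snd : ∀ {Γ : List (VTy E)} {M : Comp} {φ : E} {B₁ B₂ : CTy E},
      CHasTy S Γ M φ (.wth B₁ B₂) → CHasTy S Γ (.snd M) φ B₂
  | seq : ∀ {Γ : List (VTy E)} {V : Val} {M : Comp} {φ : E} {B : CTy E},
      VHasTy S Γ V .unit → CHasTy S Γ M φ B → CHasTy S Γ (.seq V M) φ B
  | case : ∀ {Γ : List (VTy E)} {V : Val} {A₁ A₂ : VTy E} {M₁ M₂ : Comp} {φ : E} {B : CTy E},
      VHasTy S Γ V (.sum A₁ A₂) → CHasTy S (A₁ :: Γ) M₁ φ B →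
      CHasTy S (A₂ :: Γ) M₂ φ B → CHasTy S Γ (.case V M₁ M₂) φ B
end

/-- Lifting a de Bruijn renaming under one binder. -/
def liftRen (f : Nat → Nat) : Nat → Nat
  | 0 => 0
  | n + 1 => f n + 1

mutual
/-- Renaming of values. -/
def Val.rename : Val → (Nat → Nat) → Val
  | .var x, f => .var (f x)
  | .unit, _ => .unit
  | .thunk M, f => .thunk (M.rename f)
  | .pair V₁ V₂, f => .pair (V₁.rename f) (V₂.rename f)
  | .inl V, f => .inl (V.rename f)
  | .inr V, f => .inr (V.rename f)
/-- Renaming of computations. -/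
def Comp.rename : Comp → (Nat → Nat) → Comp
  | .lam M, f => .lam (M.rename (liftRen f))
  | .app M V, f => .app (M.rename f) (V.rename f)
  | .force V, f => .force (V.rename f)
  | .split V N, f => .split (V.rename f) (N.rename (liftRen (liftRen f)))
  | .cpair M₁ M₂, f => .cpair (M₁.rename f) (M₂.rename f)
  | .fst M, f => .fst (M.rename f)
  | .snd M, f => .snd (M.rename f)
  | .ret V, f => .ret (V.rename f)
  | .letin M N, f => .letin (M.rename f) (N.rename (liftRen f))
  | .seq V M, f => .seq (V.rename f) (M.rename f)
  | .case V M₁ M₂, f => .case (V.rename f) (M₁.rename (liftRen f)) (M₂.rename (liftRen f))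
  | .tick, _ => .tick
end

/-- Weakening: shift all free variables up by one. -/
def shift (M : Comp) : Comp := M.rename Nat.succ

/-- Weakening under one binder: shift all free variables except index 0 up by one. -/
def shift1 (M : Comp) : Comp := M.rename (liftRen Nat.succ)

/-- Weakening under two binders. -/
def shift2 (M : Comp) : Comp := M.rename (liftRen (liftRen Nat.succ))

end CBPVEff

namespace LamEff

/-- Types of the CBV λ-calculus with effects; function types carry a latent effect. -/
inductive Ty (E : Type) : Type where
  | unit : Ty E
  | arr : Ty E → E → Ty E → Ty E
  | tensor : Ty E → Ty E → Ty E
  | sum : Ty E → Ty E → Ty E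

/-- Terms of the CBV λ-calculus with effects (de Bruijn indices). -/
inductive Tm : Type where
  | tick : Tm
  | var : Nat → Tm
  | lam : Tm → Tm
  | app : Tm → Tm → Tm
  | unit : Tm
  | seq : Tm → Tm → Tm
  | pair : Tm → Tm → Tm
  | split : Tm → Tm → Tm
  | inl : Tm → Tm
  | inr : Tm → Tm
  | case : Tm → Tm → Tm → Tm

/-- The type-and-effect judgment `Γ ⊢ e :^φ τ` of the source CBV λ-calculus. -/
inductive HasTy {E : Type} (S : EffSig E) : List (Ty E) → Tm → E → Ty E → Prop where
  | tick : ∀ {Γ : List (Ty E)} {φ : E}, S.le S.tock φ → HasTy S Γ .tick φ .unit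
  | var : ∀ {Γ : List (Ty E)} {x : Nat} {τ : Ty E} {φ : E},
      Γ[x]? = some τ → S.le S.bot φ → HasTy S Γ (.var x) φ τ
  | lam : ∀ {Γ : List (Ty E)} {e : Tm} {τ₁ τ₂ : Ty E} {φ' φ : E},
      HasTy S (τ₁ :: Γ) e φ' τ₂ → S.le S.bot φ → HasTy S Γ (.lam e) φ (.arr τ₁ φ' τ₂)
  | app : ∀ {Γ : List (Ty E)} {e₁ e₂ : Tm} {τ₁ τ₂ : Ty E} {φ₁ φ₂ φ₃ φ : E},
      HasTy S Γ e₁ φ₁ (.arr τ₁ φ₃ τ₂) → HasTy S Γ e₂ φ₂ τ₁ →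
      S.le (S.op (S.op φ₁ φ₂) φ₃) φ → HasTy S Γ (.app e₁ e₂) φ τ₂
  | unit : ∀ {Γ : List (Ty E)} {φ : E}, S.le S.bot φ → HasTy S Γ .unit φ .unit
  | seq : ∀ {Γ : List (Ty E)} {e₁ e₂ : Tm} {τ : Ty E} {φ₁ φ₂ φ : E},
      HasTy S Γ e₁ φ₁ .unit → HasTy S Γ e₂ φ₂ τ → S.le (S.op φ₁ φ₂) φ →
      HasTy S Γ (.seq e₁ e₂) φ τ
  | pair : ∀ {Γ : List (Ty E)} {e₁ e₂ : Tm} {τ₁ τ₂ : Ty E} {φ₁ φ₂ φ : E},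
      HasTy S Γ e₁ φ₁ τ₁ → HasTy S Γ e₂ φ₂ τ₂ → S.le (S.op φ₁ φ₂) φ →
      HasTy S Γ (.pair e₁ e₂) φ (.tensor τ₁ τ₂)
  | split : ∀ {Γ : List (Ty E)} {e₁ e₂ : Tm} {τ₁ τ₂ τ : Ty E} {φ₁ φ₂ φ : E},
      HasTy S Γ e₁ φ₁ (.tensor τ₁ τ₂) → HasTy S (τ₂ :: τ₁ :: Γ) e₂ φ₂ τ →
      S.le (S.op φ₁ φ₂) φ → HasTy S Γ (.split e₁ e₂) φ τ
  | inl : ∀ {Γ : List (Ty E)} {e : Tm} {τ₁ τ₂ : Ty E} {φ₁ φ : E},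
      HasTy S Γ e φ₁ τ₁ → S.le φ₁ φ → HasTy S Γ (.inl e) φ (.sum τ₁ τ₂)
  | inr : ∀ {Γ : List (Ty E)} {e : Tm} {τ₁ τ₂ : Ty E} {φ₁ φ : E},
      HasTy S Γ e φ₁ τ₂ → S.le φ₁ φ → HasTy S Γ (.inr e) φ (.sum τ₁ τ₂)
  | case : ∀ {Γ : List (Ty E)} {e e₁ e₂ : Tm} {τ₁ τ₂ τ : Ty E} {φ₁ φ₂ φ : E},
      HasTy S Γ e φ₁ (.sum τ₁ τ₂) → HasTy S (τ₁ :: Γ) e₁ φ₂ τ →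
      HasTy S (τ₂ :: Γ) e₂ φ₂ τ → S.le (S.op φ₁ φ₂) φ →
      HasTy S Γ (.case e e₁ e₂) φ τ

end LamEff

open CBPVEff LamEff

/-- CBV translation of source types into CBPV value types. -/
def tyTransV {E : Type} : Ty E → VTy E
  | .unit => .unit
  | .arr τ₁ φ τ₂ => .thunk φ (.arr (tyTransV τ₁) (.F (tyTransV τ₂)))
  | .tensor τ₁ τ₂ => .prod (tyTransV τ₁) (tyTransV τ₂)
  | .sum τ₁ τ₂ => .sum (tyTransV τ₁) (tyTransV τ₂)

/-- Levy's CBV translation of source terms into CBPV computations. -/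
def tmTransV : Tm → Comp
  | .tick => .tick
  | .var x => .ret (.var x)
  | .lam e => .ret (.thunk (.lam (tmTransV e)))
  | .app e₁ e₂ =>
      .letin (tmTransV e₁) (.letin (shift (tmTransV e₂)) (.app (.force (.var 1)) (.var 0)))
  | .unit => .ret .unit
  | .seq e₁ e₂ => .letin (tmTransV e₁) (.seq (.var 0) (shift (tmTransV e₂)))
  | .pair e₁ e₂ =>
      .letin (tmTransV e₁) (.letin (shift (tmTransV e₂)) (.ret (.pair (.var 1) (.var 0))))
  | .split e₁ e₂ => .letin (tmTransV e₁) (.split (.var 0) (shift2 (tmTransV e₂)))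
  | .inl e => .letin (tmTransV e) (.ret (.inl (.var 0)))
  | .inr e => .letin (tmTransV e) (.ret (.inr (.var 0)))
  | .case e e₁ e₂ =>
      .letin (tmTransV e) (.case (.var 0) (shift1 (tmTransV e₁)) (shift1 (tmTransV e₂)))

/-!
The translation evaluates the subterms of `e` in order and binds each result to a fresh variable,
so an induction on the source derivation needs two facts about CBPV. Since the later subterms are
weakened past the fresh variables, typing must be stable under weakening; the induction that proves
this goes under binders and therefore needs arbitrary type-preserving renamings. And since the
target sequences to the right and may end in a `return` of effect `⊥`, whereas the source combines
effects to the left and has no such `return`, the effects agree by associativity and the right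
identity law.
-/

namespace CBPVEff

/-- The map `f` on de Bruijn indices sends each variable of the context `Γ` to a variable of the
context `Δ` of the same type. Indices outside `Γ` are unconstrained. -/
def IsRenaming {α : Type*} (f : Nat → Nat) (Γ Δ : List α) : Prop :=
  ∀ ⦃x : Nat⦄ ⦃a : α⦄, Γ[x]? = some a → Δ[f x]? = some a

theorem isRenaming_succ {α : Type*} (Γ : List α) (a : α) : IsRenaming Nat.succ Γ (a :: Γ) :=
  fun _ _ hx => hx

theorem IsRenaming.liftRen {α : Type*} {f : Nat → Nat} {Γ Δ : List α} (hf : IsRenaming f Γ Δ)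
    (a : α) : IsRenaming (liftRen f) (a :: Γ) (a :: Δ)
  | 0, _, hx => hx
  | _ + 1, _, hx => hf hx

section Typing

variable {E : Type} {S : EffSig E}

mutual

theorem VHasTy.rename {f : Nat → Nat} {Γ Δ : List (VTy E)} {V : Val} {A : VTy E}
    (hf : IsRenaming f Γ Δ) : VHasTy S Γ V A → VHasTy S Δ (V.rename f) A
  | .var hx => .var (hf hx)
  | .unit => .unit
  | .thunk hM => .thunk (hM.rename hf)
  | .pair hV₁ hV₂ => .pair (hV₁.rename hf) (hV₂.rename hf)
  | .inl hV => .inl (hV.rename hf)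
  | .inr hV => .inr (hV.rename hf)

theorem CHasTy.rename {f : Nat → Nat} {Γ Δ : List (VTy E)} {M : Comp} {φ : E} {B : CTy E}
    (hf : IsRenaming f Γ Δ) : CHasTy S Γ M φ B → CHasTy S Δ (M.rename f) φ B
  | .tick hφ => .tick hφ
  | .lam hM => .lam (hM.rename (hf.liftRen _))
  | .app hM hV => .app (hM.rename hf) (hV.rename hf)
  | .force hV hφ => .force (hV.rename hf) hφ
  | .ret hV hφ => .ret (hV.rename hf) hφ
  | .letin hM hN hφ => .letin (hM.rename hf) (hN.rename (hf.liftRen _)) hφ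
  | .split hV hN => .split (hV.rename hf) (hN.rename ((hf.liftRen _).liftRen _))
  | .cpair hM₁ hM₂ => .cpair (hM₁.rename hf) (hM₂.rename hf)
  | .fst hM => .fst (hM.rename hf)
  | .snd hM => .snd (hM.rename hf)
  | .seq hV hM => .seq (hV.rename hf) (hM.rename hf)
  | .case hV hM₁ hM₂ =>
    .case (hV.rename hf) (hM₁.rename (hf.liftRen _)) (hM₂.rename (hf.liftRen _))

end

variable {Γ : List (VTy E)} {A A₁ A₂ C : VTy E} {B : CTy E} {M N P : Comp} {V : Val}
  {φ φ₁ φ₂ φ₃ : E}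

theorem CHasTy.shift (hM : CHasTy S Γ M φ B) : CHasTy S (C :: Γ) (shift M) φ B :=
  hM.rename (isRenaming_succ Γ C)

theorem CHasTy.shift1 (hM : CHasTy S (A :: Γ) M φ B) : CHasTy S (A :: C :: Γ) (shift1 M) φ B :=
  hM.rename ((isRenaming_succ Γ C).liftRen A)

theorem CHasTy.shift2 (hM : CHasTy S (A₂ :: A₁ :: Γ) M φ B) :
    CHasTy S (A₂ :: A₁ :: C :: Γ) (shift2 M) φ B :=
  hM.rename (((isRenaming_succ Γ C).liftRen A₁).liftRen A₂)

theorem CHasTy.letin_ret (hM : CHasTy S Γ M φ₁ (.F A)) (hV : VHasTy S (A :: Γ) V C)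
    (hφ : S.le φ₁ φ) : CHasTy S Γ (.letin M (.ret V)) φ (.F C) :=
  .letin hM (.ret hV (S.le_refl S.bot)) ((S.op_bot φ₁).symm ▸ hφ)

theorem CHasTy.letin_letin (hM : CHasTy S Γ M φ₁ (.F A₁)) (hN : CHasTy S (A₁ :: Γ) N φ₂ (.F A₂))
    (hP : CHasTy S (A₂ :: A₁ :: Γ) P φ₃ B) (hφ : S.le (S.op (S.op φ₁ φ₂) φ₃) φ) :
    CHasTy S Γ (.letin M (.letin N P)) φ B :=
  .letin hM (.letin hN hP (S.le_refl _)) (S.op_assoc φ₁ φ₂ φ₃ ▸ hφ)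

end Typing

end CBPVEff

/-- Type-and-effect preservation of the CBV translation:
if `Γ ⊢ e :^φ τ` in the CBV λ-calculus with effects, then
`⟦Γ⟧v ⊢ ⟦e⟧v :^φ F ⟦τ⟧v` in CBPV with effects. -/
theorem cbv_translation_preservation {E : Type} (S : EffSig E) {Γ : List (Ty E)}
    {e : Tm} {φ : E} {τ : Ty E} (h : LamEff.HasTy S Γ e φ τ) :
    CHasTy S (Γ.map tyTransV) (tmTransV e) φ (.F (tyTransV τ)) := by
  induction h with
  | tick hφ => exact .tick hφ
  | var hx hφ => exact .ret (.var (by simp [hx])) hφ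
  | lam _ hφ ih => exact .ret (.thunk (.lam ih)) hφ
  | app _ _ hφ ih₁ ih₂ =>
    exact .letin_letin ih₁ ih₂.shift (.app (.force (.var rfl) (S.le_refl _)) (.var rfl)) hφ
  | unit hφ => exact .ret .unit hφ
  | seq _ _ hφ ih₁ ih₂ => exact .letin ih₁ (.seq (.var rfl) ih₂.shift) hφ
  | pair _ _ hφ ih₁ ih₂ =>
    exact .letin ih₁ (ih₂.shift.letin_ret (.pair (.var rfl) (.var rfl)) (S.le_refl _)) hφ
  | split _ _ hφ ih₁ ih₂ => exact .letin ih₁ (.split (.var rfl) ih₂.shift2) hφ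
  | inl _ hφ ih => exact ih.letin_ret (.inl (.var rfl)) hφ
  | inr _ hφ ih => exact ih.letin_ret (.inr (.var rfl)) hφ
  | case _ _ _ hφ ih ih₁ ih₂ => exact .letin ih (.case (.var rfl) ih₁.shift1 ih₂.shift1) hφ
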